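/- arXiv:1509.00332 — 3 statements merged into one kernel-verified Lean document; each statement's English description precedes it below -/
import Mathlib

section
/- Let p be a prime. The quotient group ℤ_pˣ/(ℤ_pˣ)² of the unit group of the p-adic integers by its subgroup of squares is cyclic of order 2 if p ≠ 2, and if p = 2 it is isomorphic to a product of two cyclic groups of order 2 (in particular it has order 4 and every element has order dividing 2). -/
/-!
Both cases exhibit the squares as the kernel of an explicit surjection out of `ℤ_pˣ`, and compute
the quotient as its image.

For odd `p` the surjection is `ℤ_pˣ → (ZMod p)ˣ → {±1}`, reduction followed by the quadratic
character. For `p = 2` it is reduction `ℤ_2ˣ → (ZMod 8)ˣ`, whose target has order `4` and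
exponent `2`. In both cases the kernel consists of squares by Hensel's lemma for `X² - u`
(`exists_unit_sq_eq`): from an approximate root `a` with `a² ≡ u mod p` for odd `p`, and from
`a = 1` with `u ≡ 1 mod 8` for `p = 2`, where `‖1 - u‖ ≤ 1/8 < 1/4 = ‖2‖²`.
-/

/-- Hensel's lemma for `X ^ 2 - u`. -/
lemma exists_unit_sq_eq {p : ℕ} [Fact p.Prime] (u : ℤ_[p]ˣ) (a : ℤ_[p])
    (h : ‖a ^ 2 - (u : ℤ_[p])‖ < ‖2 * a‖ ^ 2) : ∃ v : ℤ_[p]ˣ, v ^ 2 = u := by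
  obtain ⟨z, hz, -⟩ := hensels_lemma (p := p) (R := ℤ_[p])
    (F := Polynomial.X ^ 2 - Polynomial.C (u : ℤ_[p])) (a := a)
    (by simpa [one_add_one_eq_two] using h)
  have hz2 : z ^ 2 = u := by simpa [sub_eq_zero] using hz
  have hzu : IsUnit z := (isUnit_pow_iff two_ne_zero).mp (hz2 ▸ u.isUnit)
  exact ⟨hzu.unit, Units.ext (by simpa using hz2)⟩

/-- Reduction modulo `p` followed by the quadratic character, as a character of `ℤ_pˣ`. -/
noncomputable def unitsQuadraticChar (p : ℕ) [Fact p.Prime] : ℤ_[p]ˣ →* ℤˣ :=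
  (quadraticChar (ZMod p)).toUnitHom.comp (Units.map (PadicInt.toZMod (p := p)).toMonoidHom)

lemma unitsQuadraticChar_surjective {p : ℕ} [Fact p.Prime] (hp : p ≠ 2) :
    Function.Surjective (unitsQuadraticChar p) := by
  have hs : Function.Surjective (PadicInt.toZMod (p := p)) := ZMod.ringHom_surjective _
  have hu := IsLocalRing.surjective_units_map_of_local_ringHom _ hs (.of_surjective _ hs)
  rw [unitsQuadraticChar, MonoidHom.coe_comp]
  refine Function.Surjective.comp (fun e => ?_) hu
  rcases Int.units_eq_one_or e with rfl | rfl
  · exact ⟨1, map_one _⟩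
  · obtain ⟨a, ha⟩ := quadraticChar_exists_neg_one' (F := ZMod p)
      (by rwa [ZMod.ringChar_zmod_n])
    exact ⟨a, Units.ext (by simpa using ha)⟩

lemma unitsQuadraticChar_ker {p : ℕ} [Fact p.Prime] (hp : p ≠ 2) :
    (unitsQuadraticChar p).ker = (powMonoidHom 2 : ℤ_[p]ˣ →* ℤ_[p]ˣ).range := by
  ext u
  constructor
  · intro hu
    have h1 : quadraticChar (ZMod p) (PadicInt.toZMod (u : ℤ_[p])) = 1 := by
      simpa [unitsQuadraticChar] using congrArg Units.val (MonoidHom.mem_ker.mp hu)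
    have h0 : PadicInt.toZMod (u : ℤ_[p]) ≠ 0 := (u.isUnit.map PadicInt.toZMod).ne_zero
    obtain ⟨b, hb⟩ := (quadraticChar_one_iff_isSquare h0).mp h1
    obtain ⟨a, rfl⟩ := ZMod.ringHom_surjective (PadicInt.toZMod (p := p)) b
    have hk : ∀ x : ℤ_[p], PadicInt.toZMod x = 0 ↔ ‖x‖ < 1 := fun x => by
      rw [← RingHom.mem_ker, PadicInt.ker_toZMod, IsLocalRing.mem_maximalIdeal,
        PadicInt.mem_nonunits]
    have ha0 : PadicInt.toZMod a ≠ 0 := by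
      rintro h
      exact h0 (by rw [hb, h, mul_zero])
    have h20 : PadicInt.toZMod (2 * a) ≠ 0 := by
      rw [map_mul, map_ofNat]
      exact mul_ne_zero (Ring.two_ne_zero (by rwa [ZMod.ringChar_zmod_n])) ha0
    have h2a : ‖2 * a‖ = 1 :=
      le_antisymm (PadicInt.norm_le_one _) (not_lt.mp fun h => h20 ((hk _).mpr h))
    obtain ⟨v, hv⟩ := exists_unit_sq_eq u a (by
      rw [h2a, one_pow, ← hk, map_sub, map_pow, hb]
      ring)
    exact ⟨v, hv⟩
  · rintro ⟨v, rfl⟩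
    rw [MonoidHom.mem_ker, powMonoidHom_apply, map_pow, Int.units_sq]

/-- Reduction modulo `8` on the units of `ℤ_2`. -/
noncomputable def unitsModEight : ℤ_[2]ˣ →* (ZMod (2 ^ 3))ˣ :=
  Units.map (PadicInt.toZModPow (p := 2) 3).toMonoidHom

lemma unitsModEight_surjective : Function.Surjective unitsModEight := by
  have hs : Function.Surjective (PadicInt.toZModPow (p := 2) 3) := ZMod.ringHom_surjective _
  have : Nontrivial (ZMod (2 ^ 3)) := ZMod.nontrivial_iff.mpr (by norm_num)
  exact IsLocalRing.surjective_units_map_of_local_ringHom _ hs (.of_surjective _ hs)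

lemma unitsModEight_ker :
    unitsModEight.ker = (powMonoidHom 2 : ℤ_[2]ˣ →* ℤ_[2]ˣ).range := by
  ext u
  constructor
  · intro hu
    have h1 : PadicInt.toZModPow 3 (u : ℤ_[2]) = 1 :=
      congrArg Units.val (MonoidHom.mem_ker.mp hu)
    have hm : 1 - (u : ℤ_[2]) ∈ RingHom.ker (PadicInt.toZModPow (p := 2) 3) := by
      rw [RingHom.mem_ker, map_sub, h1, map_one, sub_self]
    rw [PadicInt.ker_toZModPow, ← PadicInt.norm_le_pow_iff_mem_span_pow] at hm
    have h2 : ‖(2 : ℤ_[2])‖ = 2⁻¹ := by simpa using PadicInt.norm_p (p := 2)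
    obtain ⟨v, hv⟩ := exists_unit_sq_eq u 1 (by
      rw [one_pow, mul_one, h2]
      refine hm.trans_lt ?_
      norm_num)
    exact ⟨v, hv⟩
  · rintro ⟨v, rfl⟩
    have h8 : ∀ x : (ZMod (2 ^ 3))ˣ, x ^ 2 = 1 := by decide
    rw [MonoidHom.mem_ker, powMonoidHom_apply, map_pow, h8]

lemma pow_two_eq_one_of_quotient {G : Type*} [CommGroup G]
    (x : G ⧸ (powMonoidHom 2 : G →* G).range) : x ^ 2 = 1 := by
  induction x using QuotientGroup.induction_on with
  | H g => exact (QuotientGroup.eq_one_iff (g ^ 2)).mpr ⟨g, rfl⟩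

lemma isKleinFour_of_card_of_sq {G : Type*} [Group G] (hc : Nat.card G = 4)
    (h : ∀ x : G, x ^ 2 = 1) : IsKleinFour G where
  card_four := hc
  exponent_two := by
    have : Nontrivial G := by
      have : Finite G := Nat.finite_of_card_ne_zero (by lia)
      exact Finite.one_lt_card_iff_nontrivial.mp (by lia)
    exact (Monoid.exponent_eq_prime_iff Nat.prime_two).mpr fun g hg =>
      orderOf_eq_prime (h g) hg

lemma isKleinFour_zmod_two_prod :
    IsKleinFour (Multiplicative (ZMod 2) × Multiplicative (ZMod 2)) :=
  isKleinFour_of_card_of_sq (by simp) (by decide)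

/-- The quotient `ℤ_pˣ/(ℤ_pˣ)²` of the unit group of the `p`-adic integers by its subgroup
of squares is cyclic of order `2` if `p ≠ 2`; if `p = 2` it is isomorphic to a product of
two cyclic groups of order `2` (in particular it has order `4` and every element has
order dividing `2`). -/
theorem padic_units_mod_squares
    (p : ℕ) [Fact p.Prime] :
    (p ≠ 2 →
      IsCyclic (ℤ_[p]ˣ ⧸ (powMonoidHom 2 : ℤ_[p]ˣ →* ℤ_[p]ˣ).range) ∧
      Nat.card (ℤ_[p]ˣ ⧸ (powMonoidHom 2 : ℤ_[p]ˣ →* ℤ_[p]ˣ).range) = 2) ∧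
    (p = 2 →
      Nonempty ((ℤ_[p]ˣ ⧸ (powMonoidHom 2 : ℤ_[p]ˣ →* ℤ_[p]ˣ).range) ≃*
        Multiplicative (ZMod 2) × Multiplicative (ZMod 2)) ∧
      Nat.card (ℤ_[p]ˣ ⧸ (powMonoidHom 2 : ℤ_[p]ˣ →* ℤ_[p]ˣ).range) = 4 ∧
      ∀ x : ℤ_[p]ˣ ⧸ (powMonoidHom 2 : ℤ_[p]ˣ →* ℤ_[p]ˣ).range, x ^ 2 = 1) := by
  constructor
  · intro hp
    let e := (QuotientGroup.quotientMulEquivOfEq (unitsQuadraticChar_ker hp).symm).trans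
      (QuotientGroup.quotientKerEquivOfSurjective _ (unitsQuadraticChar_surjective hp))
    have hc : Nat.card (ℤ_[p]ˣ ⧸ (powMonoidHom 2 : ℤ_[p]ˣ →* ℤ_[p]ˣ).range) = 2 := by
      rw [Nat.card_congr e.toEquiv, Nat.card_eq_fintype_card, Fintype.card_units_int]
    exact ⟨isCyclic_of_prime_card hc, hc⟩
  · rintro rfl
    let e := (QuotientGroup.quotientMulEquivOfEq unitsModEight_ker.symm).trans
      (QuotientGroup.quotientKerEquivOfSurjective _ unitsModEight_surjective)
    have hc : Nat.card (ℤ_[2]ˣ ⧸ (powMonoidHom 2 : ℤ_[2]ˣ →* ℤ_[2]ˣ).range) = 4 := by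
      rw [Nat.card_congr e.toEquiv, Nat.card_eq_fintype_card]
      decide
    have hq := isKleinFour_of_card_of_sq hc pow_two_eq_one_of_quotient
    have hz := isKleinFour_zmod_two_prod
    exact ⟨IsKleinFour.nonempty_mulEquiv, hc, pow_two_eq_one_of_quotient⟩
end

section
/- Let G be a group, let Γ and U be subgroups of G, let R be a commutative ring, let W be an R-module and let σ : U → Aut_R(W) be a group homomorphism (an R-linear representation of U on W). Suppose I is a finite index set and t : I → G is a family of elements such that G is the disjoint union of the double cosets Γ t_i U, i ∈ I. Let S be the R-module of all functions f : G → W satisfying f(γ g u) = σ(u)⁻¹(f(g)) for all γ ∈ Γ, g ∈ G, u ∈ U, with pointwise operations. Then the evaluation map f ↦ (f(t_i))_{i ∈ I} is an R-linear isomorphism from S onto the direct sum over i ∈ I of the submodules W^{Γ_i} := { w ∈ W : σ(u)(w) = w for all u ∈ U ∩ t_i⁻¹ Γ t_i }. -/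
/-!
An equivariant `f` is determined on `Γ τ U` by `f τ`, and `f τ` is fixed by `U ∩ τ⁻¹ Γ τ`
since `τ = (τ u τ⁻¹) τ u⁻¹` (`eqvtFns_apply_mem_fixedVecs`). Conversely, for `w` fixed by
`U ∩ τ⁻¹ Γ τ`, the rule `γ τ u ↦ σ(u)⁻¹ w` does not depend on the choice of `γ` and `u`
(`inv_apply_eq_of_mem_fixedVecs`), so a family of fixed vectors, one for each double coset,
glues to an equivariant function on `G`. Hence evaluation at the `t i` is bijective.
-/

/-- The `R`-module of functions `f : G → W` satisfying
`f (γ * g * u) = σ(u)⁻¹ (f g)` for all `γ ∈ Γ`, `g ∈ G` and `u ∈ U`. -/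
def eqvtFns {R G W : Type*} [CommRing R] [Group G] [AddCommGroup W] [Module R W]
    (Γ U : Subgroup G) (σ : U →* (W ≃ₗ[R] W)) : Submodule R (G → W) where
  carrier := {f | ∀ γ ∈ Γ, ∀ (g : G), ∀ (u : G) (hu : u ∈ U),
      f (γ * g * u) = (σ ⟨u, hu⟩)⁻¹ (f g)}
  add_mem' := by
    intro f g hf hg γ hγ x u hu
    simp only [Pi.add_apply, hf γ hγ x u hu, hg γ hγ x u hu, map_add]
  zero_mem' := by
    intro γ hγ x u hu
    simp only [Pi.zero_apply, map_zero]
  smul_mem' := by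
    intro r f hf γ hγ x u hu
    simp only [Pi.smul_apply, hf γ hγ x u hu, map_smul]

/-- The submodule of vectors of `W` fixed by `σ(u)` for all `u ∈ U ∩ τ⁻¹ Γ τ`. -/
def fixedVecs {R G W : Type*} [CommRing R] [Group G] [AddCommGroup W] [Module R W]
    (Γ U : Subgroup G) (σ : U →* (W ≃ₗ[R] W)) (τ : G) : Submodule R W where
  carrier := {w | ∀ (u : G) (hu : u ∈ U), τ * u * τ⁻¹ ∈ Γ → σ ⟨u, hu⟩ w = w}
  add_mem' := by
    intro w₁ w₂ h₁ h₂ u hu hτ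
    simp only [map_add, h₁ u hu hτ, h₂ u hu hτ]
  zero_mem' := by
    intro u hu hτ
    simp only [map_zero]
  smul_mem' := by
    intro r w h u hu hτ
    simp only [map_smul, h u hu hτ]

theorem eqvtFns_apply_mem_fixedVecs
    {R G W : Type*} [CommRing R] [Group G] [AddCommGroup W] [Module R W]
    {Γ U : Subgroup G} {σ : U →* (W ≃ₗ[R] W)} {f : G → W} (hf : f ∈ eqvtFns Γ U σ) (τ : G) :
    f τ ∈ fixedVecs Γ U σ τ := by
  intro u hu hτ
  have h := hf _ hτ τ u⁻¹ (U.inv_mem hu)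
  have hinv : (⟨u⁻¹, U.inv_mem hu⟩ : U) = (⟨u, hu⟩ : U)⁻¹ := rfl
  rw [hinv, map_inv, inv_inv] at h
  rw [← h]
  congr 1
  group

/-- The value `σ(u)⁻¹ w` at `γ τ u` is independent of the decomposition: two decompositions
have `τ (v u⁻¹) τ⁻¹ = δ⁻¹ γ ∈ Γ`, so `σ(v u⁻¹)` fixes `w`. -/
theorem inv_apply_eq_of_mem_fixedVecs
    {R G W : Type*} [CommRing R] [Group G] [AddCommGroup W] [Module R W]
    {Γ U : Subgroup G} {σ : U →* (W ≃ₗ[R] W)} {τ : G} {w : W} (hw : w ∈ fixedVecs Γ U σ τ)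
    {γ δ u v : G} (hγ : γ ∈ Γ) (hδ : δ ∈ Γ) (hu : u ∈ U) (hv : v ∈ U)
    (h : γ * τ * u = δ * τ * v) :
    (σ ⟨u, hu⟩)⁻¹ w = (σ ⟨v, hv⟩)⁻¹ w := by
  have hmem : τ * (v * u⁻¹) * τ⁻¹ ∈ Γ := by
    have : τ * (v * u⁻¹) * τ⁻¹ = δ⁻¹ * γ := by
      calc τ * (v * u⁻¹) * τ⁻¹ = δ⁻¹ * (δ * τ * v) * u⁻¹ * τ⁻¹ := by group
        _ = δ⁻¹ * (γ * τ * u) * u⁻¹ * τ⁻¹ := by rw [h]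
        _ = δ⁻¹ * γ := by group
    rw [this]
    exact Γ.mul_mem (Γ.inv_mem hδ) hγ
  have hfix := hw (v * u⁻¹) (U.mul_mem hv (U.inv_mem hu)) hmem
  have hprod : (⟨v * u⁻¹, U.mul_mem hv (U.inv_mem hu)⟩ : U) = ⟨v, hv⟩ * (⟨u, hu⟩ : U)⁻¹ := rfl
  rw [hprod, map_mul, map_inv, LinearEquiv.mul_apply] at hfix
  conv_rhs => rw [← hfix]
  rw [← LinearEquiv.mul_apply, inv_mul_cancel, LinearEquiv.coe_one, id]

/-- Let `Γ, U ≤ G`, let `σ` be an `R`-linear representation of `U` on `W`, and suppose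
`G` is the disjoint union of finitely many double cosets `Γ t_i U`.  Then evaluation
`f ↦ (f (t_i))_i` is an `R`-linear isomorphism from the module of `(Γ, U, σ)`-equivariant
functions onto the direct sum over `i` of the submodules
`W^{U ∩ t_i⁻¹ Γ t_i}` of `σ`-fixed vectors. -/
theorem eqvtFns_equiv_pi_fixedVecs
    {R G W I : Type*} [CommRing R] [Group G] [AddCommGroup W] [Module R W] [Fintype I]
    (Γ U : Subgroup G) (σ : U →* (W ≃ₗ[R] W)) (t : I → G)
    (hpart : ∀ g : G, ∃! i : I, ∃ γ ∈ Γ, ∃ u ∈ U, g = γ * t i * u) :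
    ∃ e : eqvtFns Γ U σ ≃ₗ[R] ((i : I) → fixedVecs Γ U σ (t i)),
      ∀ (f : eqvtFns Γ U σ) (i : I), ((e f i : W)) = (f : G → W) (t i) := by
  let ev : eqvtFns Γ U σ →ₗ[R] ((i : I) → fixedVecs Γ U σ (t i)) :=
    { toFun := fun f i => ⟨(f : G → W) (t i), eqvtFns_apply_mem_fixedVecs f.2 (t i)⟩
      map_add' := fun _ _ => rfl
      map_smul' := fun _ _ => rfl }
  have hinj : Function.Injective ev := by
    intro f f' h
    ext g
    obtain ⟨i, ⟨γ, hγ, u, hu, rfl⟩, -⟩ := hpart g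
    have hi : (f : G → W) (t i) = (f' : G → W) (t i) := congrArg Subtype.val (congrFun h i)
    rw [f.2 γ hγ (t i) u hu, f'.2 γ hγ (t i) u hu, hi]
  have hsurj : Function.Surjective ev := by
    intro w
    choose i hi huniq using hpart
    choose γ hγ u hu hg using hi
    let F : G → W := fun g => (σ ⟨u g, hu g⟩)⁻¹ (w (i g) : W)
    have hF : ∀ (j : I) (δ : G), δ ∈ Γ → ∀ (v : G) (hv : v ∈ U),
        F (δ * t j * v) = (σ ⟨v, hv⟩)⁻¹ (w j : W) := by
      intro j δ hδ v hv
      obtain ⟨g, hgdef⟩ : ∃ g, g = δ * t j * v := ⟨_, rfl⟩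
      rw [← hgdef]
      obtain rfl : j = i g := huniq g j ⟨δ, hδ, v, hv, hgdef⟩
      exact inv_apply_eq_of_mem_fixedVecs (w (i g)).2 (hγ g) hδ (hu g) hv
        ((hg g).symm.trans hgdef)
    refine ⟨⟨F, ?_⟩, ?_⟩
    · intro δ hδ g v hv
      have h1 : δ * g * v = (δ * γ g) * t (i g) * (u g * v) := by
        conv_lhs => rw [hg g]
        group
      have hprod : (⟨u g * v, U.mul_mem (hu g) hv⟩ : U) = ⟨u g, hu g⟩ * ⟨v, hv⟩ := rfl
      rw [h1, hF _ _ (Γ.mul_mem hδ (hγ g)) _ (U.mul_mem (hu g) hv), hprod, map_mul,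
        mul_inv_rev, LinearEquiv.mul_apply]
    · funext j
      apply Subtype.ext
      have h := hF j 1 Γ.one_mem 1 U.one_mem
      have hone : (⟨1, U.one_mem⟩ : U) = 1 := rfl
      rw [one_mul, mul_one, hone, map_one, inv_one, LinearEquiv.coe_one, id] at h
      exact h
  exact ⟨LinearEquiv.ofBijective ev ⟨hinj, hsurj⟩, fun _ _ => rfl⟩
end

section
/- Let A be a commutative Noetherian local ring of Krull dimension d ≥ 1 and let x₁, …, x_d be a system of parameters of A, i.e. elements of the maximal ideal such that A/(x₁, …, x_d) has Krull dimension 0. Assume A is equidimensional, meaning that A/𝔭 has Krull dimension d for every minimal prime 𝔭 of A. Then for every minimal prime 𝔭 of A there exists a prime ideal 𝔮 of A with 𝔭 ⊆ 𝔮, with x₂, …, x_d ∈ 𝔮, and with x₁ ∉ 𝔮; equivalently, every irreducible component of Spec A contains a point of Spec((A/(x₂, …, x_d))[1/x₁]). -/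
/-!
If no such `𝔮` existed, every prime containing `𝔭` and `x₂, …, x_d` would contain all of
`x₁, …, x_d`, and hence be maximal, because `A/(x₁, …, x_d)` has dimension zero. The maximal
ideal of the local ring `A/𝔭` would then be a minimal prime over the ideal generated by the images
of the `d - 1` elements `x₂, …, x_d`, so Krull's height theorem would give `dim A/𝔭 ≤ d - 1`,
contradicting equidimensionality.
-/

/-- Let `A` be a Noetherian local ring of Krull dimension `d ≥ 1`, let `x₁, …, x_d` be a
system of parameters of `A`, and assume `A` is equidimensional (every minimal prime `𝔭`
satisfies `dim A/𝔭 = d`).  Then every irreducible component of `Spec A` contains a point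
of `Spec ((A/(x₂, …, x_d))[1/x₁])`: for every minimal prime `𝔭` there is a prime `𝔮`
containing `𝔭` and `x₂, …, x_d` but not `x₁`. -/
theorem minimalPrime_le_prime_avoiding_first_parameter
    (A : Type*) [CommRing A] [IsNoetherianRing A] [IsLocalRing A]
    (d : ℕ) (hd : 1 ≤ d) (hdim : ringKrullDim A = (d : WithBot ℕ∞))
    (x : Fin d → A) (hx : ∀ i, x i ∈ IsLocalRing.maximalIdeal A)
    (hsop : ringKrullDim (A ⧸ Ideal.span (Set.range x)) = 0)
    (hequi : ∀ 𝔭 ∈ minimalPrimes A, ringKrullDim (A ⧸ 𝔭) = (d : WithBot ℕ∞)) :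
    ∀ 𝔭 ∈ minimalPrimes A, ∃ 𝔮 : Ideal A, 𝔮.IsPrime ∧ 𝔭 ≤ 𝔮 ∧
      (∀ i : Fin d, i ≠ ⟨0, hd⟩ → x i ∈ 𝔮) ∧ x ⟨0, hd⟩ ∉ 𝔮 := by
  classical
  intro 𝔭 h𝔭
  by_contra! hcon
  have hprime : 𝔭.IsPrime := h𝔭.1.1
  have : IsLocalRing (A ⧸ 𝔭) :=
    IsLocalRing.of_surjective' (Ideal.Quotient.mk 𝔭) Ideal.Quotient.mk_surjective
  have : Ring.KrullDimLE 0 (A ⧸ Ideal.span (Set.range x)) :=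
    (Ring.krullDimLE_iff).2 (by simp [hsop])
  have hmax (𝔮 : Ideal A) (hq : 𝔮.IsPrime) (hle : Ideal.span (Set.range x) ≤ 𝔮) :
      𝔮 = IsLocalRing.maximalIdeal A := by
    have hker : RingHom.ker (Ideal.Quotient.mk (Ideal.span (Set.range x))) ≤ 𝔮 := by
      rwa [Ideal.mk_ker]
    have := Ideal.map_isPrime_of_surjective Ideal.Quotient.mk_surjective hker
    have hm := Ring.krullDimLE_zero_iff.1 ‹_›
      (𝔮.map (Ideal.Quotient.mk (Ideal.span (Set.range x)))) this
    have := Ideal.comap_isMaximal_of_surjective (Ideal.Quotient.mk (Ideal.span (Set.range x)))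
      Ideal.Quotient.mk_surjective (K := 𝔮.map (Ideal.Quotient.mk (Ideal.span (Set.range x))))
    rw [Ideal.comap_map_of_surjective' _ Ideal.Quotient.mk_surjective, sup_eq_left.2 hker] at this
    exact IsLocalRing.eq_maximalIdeal this
  let s : Finset (A ⧸ 𝔭) :=
    (Finset.univ.erase (⟨0, hd⟩ : Fin d)).image fun i => Ideal.Quotient.mk 𝔭 (x i)
  have hs : s.card ≤ d - 1 := Finset.card_image_le.trans (by simp)
  have hcomap : (IsLocalRing.maximalIdeal (A ⧸ 𝔭)).comap (Ideal.Quotient.mk 𝔭) =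
      IsLocalRing.maximalIdeal A :=
    IsLocalRing.eq_maximalIdeal
      (Ideal.comap_isMaximal_of_surjective _ Ideal.Quotient.mk_surjective)
  have hmin : IsLocalRing.maximalIdeal (A ⧸ 𝔭) ∈ (Ideal.span (s : Set (A ⧸ 𝔭))).minimalPrimes := by
    refine ⟨⟨inferInstance, ?_⟩, ?_⟩
    · rw [Ideal.span_le]
      intro y hy
      obtain ⟨i, -, rfl⟩ := Finset.mem_image.1 hy
      have := hx i
      rwa [← hcomap] at this
    · rintro Q ⟨hQ, hsQ⟩ -
      have hQi (i : Fin d) (hi : i ≠ ⟨0, hd⟩) : x i ∈ Q.comap (Ideal.Quotient.mk 𝔭) :=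
        hsQ (Ideal.subset_span (Finset.mem_image_of_mem _ (by simpa using hi)))
      have hQ0 := hcon (Q.comap (Ideal.Quotient.mk 𝔭)) inferInstance
        (fun a ha => by simp [Ideal.mem_comap, Ideal.Quotient.eq_zero_iff_mem.2 ha]) hQi
      have hQmax := hmax (Q.comap (Ideal.Quotient.mk 𝔭)) inferInstance <| by
        rw [Ideal.span_le]
        rintro _ ⟨i, rfl⟩
        by_cases hi : i = ⟨0, hd⟩
        · exact hi ▸ hQ0
        · exact hQi i hi
      rw [← hcomap] at hQmax
      exact (Ideal.comap_injective_of_surjective _ Ideal.Quotient.mk_surjective hQmax).ge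
  have hle := Ideal.height_le_card_of_mem_minimalPrimes_span_finset hmin
  have hheight := IsLocalRing.maximalIdeal_height_eq_ringKrullDim (R := A ⧸ 𝔭)
  rw [hequi 𝔭 h𝔭] at hheight
  have hheight' : (IsLocalRing.maximalIdeal (A ⧸ 𝔭)).height = (d : ℕ∞) := by
    exact_mod_cast hheight
  rw [hheight'] at hle
  have : d ≤ s.card := by exact_mod_cast hle
  omega
end
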